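/- arXiv:2303.16525 — 2 statements merged into one kernel-verified Lean document; each statement's English description precedes it below -/
import Mathlib

section
/- For any radius ρ > 0 and any sequence ξ = (ξ_α)_{α ∈ ℕⁿ} of complex numbers with ∑_α |ξ_α| ρ^{|α|} < ∞ for all ρ > 0, and any holomorphic function F on a domain D ⊆ ℂⁿ, the series (ξ·F)(z) := ∑_{α ∈ ℕⁿ} ξ_α F^{(α)}(z)/α! converges absolutely for every z ∈ D, and the resulting function z ↦ (ξ·F)(z) is holomorphic on D. -/
open MeasureTheory Filter Topology Complex
open scoped ENNReal
noncomputable section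

/-- The total degree `|α|` of a multi-index. -/
def mdeg {n : ℕ} (α : Fin n → ℕ) : ℕ := ∑ i, α i

/-- The factorial `α!` of a multi-index. -/
def mfact {n : ℕ} (α : Fin n → ℕ) : ℕ := ∏ i, Nat.factorial (α i)

/-- Partial derivative in the `i`-th coordinate direction. -/
def pderivC {n : ℕ} (i : Fin n) (f : (Fin n → ℂ) → ℂ) : (Fin n → ℂ) → ℂ :=
  fun z => deriv (fun t : ℂ => f (Function.update z i t)) (z i)

/-- Iterated partial derivative `∂^{|α|} f / ∂z^α`. -/
def multiDeriv {n : ℕ} (α : Fin n → ℕ) (f : (Fin n → ℂ) → ℂ) : (Fin n → ℂ) → ℂ :=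
  (List.finRange n).foldr (fun i g => (pderivC i)^[α i] g) f

/-- Membership in `ℓ₁^{(n)}`: `∑_α |ξ_α| ρ^{|α|} < ∞` for every `ρ > 0`. -/
def MemL1 {n : ℕ} (ξ : (Fin n → ℕ) → ℂ) : Prop :=
  ∀ ρ : ℝ, 0 < ρ → Summable fun α : Fin n → ℕ => ‖ξ α‖ * ρ ^ mdeg α

/-- The action `(ξ·f)(z) = ∑_α ξ_α f^{(α)}(z)/α!`. -/
def xiAct {n : ℕ} (ξ : (Fin n → ℕ) → ℂ) (f : (Fin n → ℂ) → ℂ) (z : Fin n → ℂ) : ℂ :=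
  ∑' α : Fin n → ℕ, ξ α * multiDeriv α f z / (mfact α : ℂ)

/-- Plurisubharmonicity of an `EReal`-valued function on a set: upper semicontinuity
together with the sub-mean value inequality on every complex circle whose closed disc
is contained in the set (expressed via integrable real-valued majorants). -/
def PlurisubharmonicOn {E : Type*} [NormedAddCommGroup E] [NormedSpace ℂ E]
    (f : E → EReal) (s : Set E) : Prop :=
  UpperSemicontinuousOn f s ∧
  ∀ z ∈ s, ∀ v : E, (∀ t : ℂ, ‖t‖ ≤ 1 → z + t • v ∈ s) →
    ∀ g : ℝ → ℝ, IntervalIntegrable g volume 0 (2 * Real.pi) →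
      (∀ θ : ℝ, f (z + Complex.exp (θ * Complex.I) • v) ≤ (g θ : EReal)) →
      f z ≤ (((2 * Real.pi)⁻¹ * ∫ θ in (0:ℝ)..(2 * Real.pi), g θ : ℝ) : EReal)

/-- The weighted `L²` integral `∫_D |f|² e^{-ψ}`. -/
def wL2 {n : ℕ} (D : Set (Fin n → ℂ)) (ψ : (Fin n → ℂ) → ℝ) (f : (Fin n → ℂ) → ℂ) : ℝ≥0∞ :=
  ∫⁻ z in D, ENNReal.ofReal (‖f z‖ ^ 2 * Real.exp (-ψ z))

/-- Membership in the weighted Bergman space `A²(D, e^{-ψ})`. -/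
def MemA2 {n : ℕ} (D : Set (Fin n → ℂ)) (ψ : (Fin n → ℂ) → ℝ) (f : (Fin n → ℂ) → ℂ) : Prop :=
  DifferentiableOn ℂ f D ∧ wL2 D ψ f < ⊤

/-- The weighted `ξ`-Bergman kernel `K^ψ_{ξ,D}(z)`. -/
def xiBergman {n : ℕ} (ξ : (Fin n → ℕ) → ℂ) (D : Set (Fin n → ℂ))
    (ψ : (Fin n → ℂ) → ℝ) (z : Fin n → ℂ) : ℝ≥0∞ :=
  ⨆ f : {f // MemA2 D ψ f}, ENNReal.ofReal (‖xiAct ξ f.1 z‖ ^ 2) / wL2 D ψ f.1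

/-- The locally uniformly bounded property for a functional-valued function on `D`. -/
def LocUnifBdd {n m : ℕ} (ξ : (Fin m → ℂ) → (Fin n → ℕ) → ℂ) (D : Set (Fin m → ℂ)) : Prop :=
  ∀ w ∈ D, ∀ ρ : ℝ, 0 < ρ → ∃ V ∈ 𝓝 w, ∃ C : ℝ,
    ∀ w' ∈ V ∩ D, (∑' α : Fin n → ℕ, ENNReal.ofReal (‖ξ w' α‖ * ρ ^ mdeg α)) ≤ ENNReal.ofReal C

open Metric in
/-- Cauchy estimate for the Fréchet derivative of a bounded holomorphic function on a ball. -/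
lemma norm_fderiv_le_of_norm_le_on_ball {E : Type*} [NormedAddCommGroup E] [NormedSpace ℂ E]
    {f : E → ℂ} {c : E} {R M : ℝ} (hR : 0 < R) (hf : DifferentiableOn ℂ f (ball c R))
    (hM : ∀ z ∈ ball c R, ‖f z‖ ≤ M) : ‖fderiv ℂ f c‖ ≤ 2 * M / R := by
  refine norm_fderiv_le_div_of_mapsTo_ball hf (fun z hz => ?_) hR
  rw [mem_closedBall, dist_eq_norm]
  linarith [norm_sub_le (f z) (f c), hM z hz, hM c (mem_ball_self hR)]

open Metric in
/-- Directional derivatives of a holomorphic function of several variables are holomorphic. -/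
lemma differentiableOn_deriv_line {E : Type*} [NormedAddCommGroup E]
    [NormedSpace ℂ E] [FiniteDimensional ℂ E] {D : Set E} (hD : IsOpen D) {f : E → ℂ}
    (hf : DifferentiableOn ℂ f D) (v : E) :
    DifferentiableOn ℂ (fun z => deriv (fun t : ℂ => f (z + t • v)) 0) D := by
  borelize E
  intro z₀ hz₀
  have hc : ContinuousAt f z₀ := (hf.differentiableAt (hD.mem_nhds hz₀)).continuousAt
  have hbd : ∀ᶠ z in 𝓝 z₀, ‖f z‖ < ‖f z₀‖ + 1 :=
    hc.norm.eventually_lt_const (lt_add_one _)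
  obtain ⟨ε, hε, hball⟩ := Metric.mem_nhds_iff.1 (inter_mem (hD.mem_nhds hz₀) hbd)
  set M := ‖f z₀‖ + 1
  set r : ℝ := ε / 4 with hr
  set R : ℝ := r / (‖v‖ + 1) with hRdef
  have hr0 : 0 < r := by positivity
  have hR : 0 < R := by positivity
  have hRv : R * ‖v‖ ≤ r := by
    rw [hRdef, div_mul_eq_mul_div, div_le_iff₀ (by positivity)]
    nlinarith [norm_nonneg v]
  have hshift : ∀ z ∈ ball z₀ r, ∀ t ∈ closedBall (0 : ℂ) R, z + t • v ∈ ball z₀ (2 * r) := by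
    intro z hz t ht
    rw [mem_ball, dist_eq_norm] at hz ⊢
    rw [mem_closedBall, dist_zero_right] at ht
    have h1 : ‖t • v‖ ≤ r := by
      rw [norm_smul]
      exact (mul_le_mul_of_nonneg_right ht (norm_nonneg v)).trans hRv
    calc ‖z + t • v - z₀‖ = ‖(z - z₀) + t • v‖ := by congr 1; abel
      _ ≤ ‖z - z₀‖ + ‖t • v‖ := norm_add_le _ _
      _ < 2 * r := by linarith
  have hsub : ∀ w ∈ ball z₀ (2 * r), ball w r ⊆ ball z₀ ε := by
    intro w hw
    refine ball_subset_ball' ?_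
    rw [mem_ball] at hw
    linarith
  have hdiff : ∀ w ∈ ball z₀ (2 * r), DifferentiableAt ℂ f w := fun w hw =>
    hf.differentiableAt (hD.mem_nhds (hball (hsub w hw (mem_ball_self hr0))).1)
  have hfd : ∀ w ∈ ball z₀ (2 * r), ‖fderiv ℂ f w‖ ≤ 2 * M / r := fun w hw =>
    norm_fderiv_le_of_norm_le_on_ball hr0
      (hf.mono fun x hx => (hball (hsub w hw hx)).1) fun x hx => (hball (hsub w hw hx)).2.le
  have hline : ∀ z ∈ ball z₀ r, ∀ t ∈ closedBall (0 : ℂ) R,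
      DifferentiableAt ℂ (fun t : ℂ => f (z + t • v)) t := fun z hz t ht =>
    (hdiff _ (hshift z hz t ht)).comp t (by fun_prop)
  have hcirc : ∀ θ, circleMap (0 : ℂ) R θ ∈ closedBall (0 : ℂ) R := fun θ =>
    circleMap_mem_closedBall 0 hR.le θ
  have hne : ∀ θ, circleMap (0 : ℂ) R θ ≠ 0 := fun θ => by
    simpa using circleMap_ne_center hR.ne' (c := (0 : ℂ)) (θ := θ)
  set k : ℝ → ℂ := fun θ => deriv (circleMap 0 R) θ * (1 / (circleMap 0 R θ - 0) ^ 2) with hk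
  have hkc : Continuous k := by
    simp only [hk, deriv_circleMap, sub_zero]
    refine ((continuous_circleMap 0 R).mul continuous_const).mul ?_
    exact continuous_const.div₀ ((continuous_circleMap 0 R).pow 2) fun θ => pow_ne_zero 2 (hne θ)
  have hint : ∀ z ∈ ball z₀ r, Continuous fun θ => k θ * f (z + circleMap 0 R θ • v) := by
    intro z hz
    refine hkc.mul (continuous_iff_continuousAt.2 fun θ => ?_)
    exact ((hline z hz _ (hcirc θ)).continuousAt).comp (continuous_circleMap 0 R).continuousAt
  have key : HasFDerivAt
      (fun z => ∫ θ in (0 : ℝ)..2 * Real.pi, k θ * f (z + circleMap 0 R θ • v))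
      (∫ θ in (0 : ℝ)..2 * Real.pi, k θ • fderiv ℂ f (z₀ + circleMap 0 R θ • v)) z₀ := by
    refine intervalIntegral.hasFDerivAt_integral_of_dominated_of_fderiv_le
      (F' := fun z θ => k θ • fderiv ℂ f (z + circleMap 0 R θ • v))
      (bound := fun θ => ‖k θ‖ * (2 * M / r)) (ball_mem_nhds z₀ hr0) ?_ ?_ ?_ ?_ ?_ ?_
    · filter_upwards [ball_mem_nhds z₀ hr0] with z hz
      exact (hint z hz).aestronglyMeasurable
    · exact (hint z₀ (mem_ball_self hr0)).intervalIntegrable _ _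
    · refine hkc.aestronglyMeasurable.smul ?_
      have : Measurable fun θ => fderiv ℂ f (z₀ + circleMap 0 R θ • v) :=
        (measurable_fderiv ℂ f).comp
          (continuous_const.add ((continuous_circleMap 0 R).smul continuous_const)).measurable
      exact this.aestronglyMeasurable
    · refine ae_of_all _ fun θ _ z hz => ?_
      rw [norm_smul]
      exact mul_le_mul_of_nonneg_left (hfd _ (hshift z hz _ (hcirc θ))) (norm_nonneg _)
    · exact (hkc.norm.mul continuous_const).intervalIntegrable _ _
    · refine ae_of_all _ fun θ _ z hz => ?_
      have h := (hdiff _ (hshift z hz _ (hcirc θ))).hasFDerivAt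
      have h2 := h.comp z ((hasFDerivAt_id z).add_const (circleMap 0 R θ • v))
      simpa using! h2.const_mul (k θ)
  have heq : (fun z => deriv (fun t : ℂ => f (z + t • v)) 0) =ᶠ[𝓝 z₀] fun z =>
      (2 * Real.pi * I : ℂ)⁻¹ *
        ∫ θ in (0 : ℝ)..2 * Real.pi, k θ * f (z + circleMap 0 R θ • v) := by
    filter_upwards [ball_mem_nhds z₀ hr0] with z hz
    have h := DifferentiableOn.deriv_eq_smul_circleIntegral hR
      (fun t ht => (hline z hz t ht).differentiableWithinAt)
    rw [circleIntegral] at h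
    simp only [smul_eq_mul, ← mul_assoc] at h
    rw [eq_inv_mul_iff_mul_eq₀ Complex.two_pi_I_ne_zero, ← h]
  exact ((key.differentiableAt.const_mul _).congr_of_eventuallyEq heq).differentiableWithinAt

lemma pderivC_eq_deriv_line {n : ℕ} (i : Fin n) (f : (Fin n → ℂ) → ℂ) (z : Fin n → ℂ) :
    pderivC i f z = deriv (fun t : ℂ => f (z + t • Pi.single i 1)) 0 := by
  have h : (fun t : ℂ => f (z + t • Pi.single i 1)) =
      fun t => (fun s => f (Function.update z i s)) (z i + t) := by
    funext t
    congr 1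
    funext j
    by_cases hj : j = i
    · subst hj; simp
    · simp [hj]
  rw [h, deriv_comp_const_add (fun s => f (Function.update z i s)), add_zero, pderivC]

lemma differentiableOn_pderivC_iterate {n : ℕ} {D : Set (Fin n → ℂ)} (hD : IsOpen D) (i : Fin n)
    {f : (Fin n → ℂ) → ℂ} (hf : DifferentiableOn ℂ f D) (k : ℕ) :
    DifferentiableOn ℂ ((pderivC i)^[k] f) D := by
  induction k with
  | zero => exact hf
  | succ k ih =>
    rw [Function.iterate_succ_apply']
    exact (differentiableOn_deriv_line hD ih (Pi.single i 1)).congr fun z _ =>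
      pderivC_eq_deriv_line i _ z

lemma pderivC_iterate_eq_iteratedDeriv {n : ℕ} (i : Fin n) (f : (Fin n → ℂ) → ℂ) (k : ℕ)
    (z : Fin n → ℂ) :
    (pderivC i)^[k] f z = iteratedDeriv k (fun t : ℂ => f (Function.update z i t)) (z i) := by
  induction k generalizing z with
  | zero => simp
  | succ k ih =>
    rw [Function.iterate_succ_apply', iteratedDeriv_succ, pderivC]
    congr 1
    funext t
    rw [ih]
    simp

lemma differentiableOn_foldr_pderivC {n : ℕ} {D : Set (Fin n → ℂ)} (hD : IsOpen D)
    {F : (Fin n → ℂ) → ℂ} (hF : DifferentiableOn ℂ F D) (α : Fin n → ℕ) (l : List (Fin n)) :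
    DifferentiableOn ℂ (l.foldr (fun i g => (pderivC i)^[α i] g) F) D := by
  induction l with
  | nil => exact hF
  | cons i l ih => exact differentiableOn_pderivC_iterate hD i ih (α i)

/-- Cauchy estimates for iterated partial derivatives along distinct coordinates. -/
lemma norm_foldr_pderivC_le {n : ℕ} {D : Set (Fin n → ℂ)} (hD : IsOpen D)
    {F : (Fin n → ℂ) → ℂ} (hF : DifferentiableOn ℂ F D) (α : Fin n → ℕ) {z : Fin n → ℂ} {r M : ℝ}
    (hr : 0 < r) (hzD : ∀ w, (∀ i, ‖w i - z i‖ ≤ r) → w ∈ D)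
    (hM : ∀ w, (∀ i, ‖w i - z i‖ ≤ r) → ‖F w‖ ≤ M) (l : List (Fin n)) (hl : l.Nodup)
    (w : Fin n → ℂ) (hw : ∀ i, ‖w i - z i‖ ≤ r) (hwl : ∀ i ∈ l, w i = z i) :
    ‖l.foldr (fun i g => (pderivC i)^[α i] g) F w‖ ≤
      (l.map fun i => (Nat.factorial (α i) : ℝ) / r ^ α i).prod * M := by
  induction l generalizing w with
  | nil => simpa using hM w hw
  | cons i l ih =>
    obtain ⟨hil, hl⟩ := List.nodup_cons.1 hl
    have hupd : ∀ t ∈ Metric.closedBall (w i) r, ∀ j, ‖Function.update w i t j - z j‖ ≤ r := by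
      intro t ht j
      by_cases hj : j = i
      · subst hj
        rw [Function.update_self, ← hwl j (by simp), ← dist_eq_norm]
        exact ht
      · rw [Function.update_of_ne hj]
        exact hw j
    rw [List.foldr_cons, pderivC_iterate_eq_iteratedDeriv, List.map_cons, List.prod_cons]
    refine (norm_iteratedDeriv_le_of_forall_mem_sphere_norm_le (α i) hr
      (DifferentiableOn.diffContOnCl ?_) fun t ht =>
        ih hl _ (hupd t (Metric.sphere_subset_closedBall ht)) fun j hj => ?_).trans_eq (by ring)
    · refine DifferentiableOn.mono (fun t ht => ?_) Metric.closure_ball_subset_closedBall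
      have h1 := (differentiableOn_foldr_pderivC hD hF α l).differentiableAt
        (hD.mem_nhds (hzD _ (hupd t ht)))
      exact (h1.comp t (hasDerivAt_update w i t).differentiableAt).differentiableWithinAt
    · rw [Function.update_of_ne (by rintro rfl; exact hil hj)]
      exact hwl j (List.mem_cons_of_mem _ hj)

/-- Cauchy estimate for `∂^α F / α!`. -/
lemma norm_multiDeriv_le {n : ℕ} {D : Set (Fin n → ℂ)} (hD : IsOpen D)
    {F : (Fin n → ℂ) → ℂ} (hF : DifferentiableOn ℂ F D) (α : Fin n → ℕ) {z : Fin n → ℂ} {r M : ℝ}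
    (hr : 0 < r) (hzD : Metric.closedBall z r ⊆ D) (hM : ∀ w ∈ Metric.closedBall z r, ‖F w‖ ≤ M) :
    ‖multiDeriv α F z‖ ≤ mfact α * (M * r⁻¹ ^ mdeg α) := by
  have hmem : ∀ w, (∀ i, ‖w i - z i‖ ≤ r) → w ∈ Metric.closedBall z r := fun w hw => by
    rw [mem_closedBall_iff_norm, pi_norm_le_iff_of_nonneg hr.le]
    exact hw
  refine (norm_foldr_pderivC_le hD hF α hr (fun w hw => hzD (hmem w hw))
    (fun w hw => hM w (hmem w hw)) _ (List.nodup_finRange n) z (by simp [hr.le])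
    fun _ _ => rfl).trans_eq ?_
  have hprod : ((List.finRange n).map fun i => (Nat.factorial (α i) : ℝ) / r ^ α i).prod =
      ∏ i, (Nat.factorial (α i) : ℝ) / r ^ α i := by
    rw [← List.ofFn_eq_map, List.prod_ofFn]
  rw [hprod, Finset.prod_div_distrib, Finset.prod_pow_eq_pow_sum, mfact, mdeg]
  push_cast
  rw [inv_pow]
  ring

/-- Locally uniform summable bounds for the terms of `ξ·F`. -/
lemma exists_summable_bound_terms {n : ℕ} {D : Set (Fin n → ℂ)} (hD : IsOpen D)
    {ξ : (Fin n → ℕ) → ℂ} (hξ : MemL1 ξ) {F : (Fin n → ℂ) → ℂ} (hF : DifferentiableOn ℂ F D)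
    {z₀ : Fin n → ℂ} (hz₀ : z₀ ∈ D) :
    ∃ r > 0, Metric.ball z₀ r ⊆ D ∧ ∃ u : (Fin n → ℕ) → ℝ, Summable u ∧
      ∀ α, ∀ z ∈ Metric.ball z₀ r, ‖ξ α * multiDeriv α F z / (mfact α : ℂ)‖ ≤ u α := by
  have hc : ContinuousAt F z₀ := (hF.differentiableAt (hD.mem_nhds hz₀)).continuousAt
  have hbd : ∀ᶠ z in 𝓝 z₀, ‖F z‖ < ‖F z₀‖ + 1 := hc.norm.eventually_lt_const (lt_add_one _)
  obtain ⟨ε, hε, hball⟩ := Metric.mem_nhds_iff.1 (inter_mem (hD.mem_nhds hz₀) hbd)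
  refine ⟨ε / 2, by positivity, fun z hz => (hball (Metric.ball_subset_ball (by linarith) hz)).1,
    fun α => (‖F z₀‖ + 1) * (‖ξ α‖ * (ε / 2)⁻¹ ^ mdeg α),
    (hξ (ε / 2)⁻¹ (by positivity)).mul_left _, fun α z hz => ?_⟩
  have hsub : Metric.closedBall z (ε / 2) ⊆ Metric.ball z₀ ε := by
    refine Metric.closedBall_subset_ball' ?_
    rw [Metric.mem_ball] at hz
    linarith
  have hfact : (0 : ℝ) < mfact α := by
    exact_mod_cast Finset.prod_pos fun i _ => Nat.factorial_pos (α i)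
  have h := norm_multiDeriv_le hD hF α (half_pos hε) (fun w hw => (hball (hsub hw)).1)
    fun w hw => (hball (hsub hw)).2.le
  rw [norm_div, norm_mul, Complex.norm_natCast, div_le_iff₀ hfact]
  calc ‖ξ α‖ * ‖multiDeriv α F z‖
      ≤ ‖ξ α‖ * (mfact α * ((‖F z₀‖ + 1) * (ε / 2)⁻¹ ^ mdeg α)) := by gcongr
    _ = _ := by ring

/-- For `ξ ∈ ℓ₁^{(n)}` and `F` holomorphic on a domain `D ⊆ ℂⁿ`, the series
`(ξ·F)(z) = ∑_α ξ_α F^{(α)}(z)/α!` converges absolutely at every point of `D`,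
and the resulting function is holomorphic on `D`. -/
theorem statement0 {n : ℕ} (D : Set (Fin n → ℂ)) (hDo : IsOpen D) (hDc : IsConnected D)
    (ξ : (Fin n → ℕ) → ℂ) (hξ : MemL1 ξ)
    (F : (Fin n → ℂ) → ℂ) (hF : DifferentiableOn ℂ F D) :
    (∀ z ∈ D, Summable fun α : Fin n → ℕ => ‖ξ α * multiDeriv α F z / (mfact α : ℂ)‖) ∧
    DifferentiableOn ℂ (xiAct ξ F) D := by
  refine ⟨fun z hz => ?_, fun z₀ hz₀ => ?_⟩
  · obtain ⟨r, hr, -, u, hu, hb⟩ := exists_summable_bound_terms hDo hξ hF hz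
    exact Summable.of_nonneg_of_le (fun _ => norm_nonneg _)
      (fun α => hb α z (Metric.mem_ball_self hr)) hu
  · obtain ⟨r, hr, hrD, u, hu, hb⟩ := exists_summable_bound_terms hDo hξ hF hz₀
    have hterm : ∀ α, DifferentiableOn ℂ
        (fun z => ξ α * multiDeriv α F z / (mfact α : ℂ)) (Metric.ball z₀ r) := fun α => by
      simp only [div_eq_mul_inv]
      exact (((differentiableOn_foldr_pderivC hDo hF α _).const_mul (ξ α)).mul_const _).mono hrD
    have hsub : ∀ z ∈ Metric.ball z₀ (r / 2), Metric.ball z (r / 2) ⊆ Metric.ball z₀ r := by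
      intro z hz
      refine Metric.ball_subset_ball' ?_
      rw [Metric.mem_ball] at hz
      linarith
    have hz₀r : z₀ ∈ Metric.ball z₀ (r / 2) := Metric.mem_ball_self (half_pos hr)
    refine (hasFDerivAt_tsum_of_isPreconnected ((hu.mul_left 2).div_const (r / 2))
      Metric.isOpen_ball (convex_ball z₀ (r / 2)).isPreconnected (fun α z hz =>
        ((hterm α).differentiableAt (Metric.isOpen_ball.mem_nhds
          (hsub z hz (Metric.mem_ball_self (half_pos hr))))).hasFDerivAt)
      (fun α z hz => norm_fderiv_le_of_norm_le_on_ball (half_pos hr)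
        ((hterm α).mono (hsub z hz)) fun w hw => hb α w (hsub z hz hw))
      hz₀r (Summable.of_norm_bounded hu fun α => hb α z₀ (Metric.mem_ball_self hr))
      hz₀r).differentiableAt.differentiableWithinAt
end
end

section
/- Let ξ(·) be a functional-valued map into ℓ₁^{(n)} on a domain D ⊆ ℂᵐ that is holomorphic (each coefficient function w ↦ ξ_α(w) is holomorphic) and satisfies the locally uniformly bounded property near w₀ ∈ D. If F(z,w) is holomorphic on a neighborhood of (z₀, w₀) in ℂ^{n+m}, then the function (z,w) ↦ (ξ(w)·F(·,w))(z) = ∑_{α∈ℕⁿ} ξ_α(w) (∂^{|α|}F/∂z^α)(z,w)/α! is holomorphic in (z,w) near (z₀, w₀). -/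
open MeasureTheory Filter Topology Complex
open scoped ENNReal
noncomputable section

/-- A weak form of Cauchy's estimate for the Fréchet derivative. -/
theorem norm_fderiv_le_of_norm_le_ball {E : Type*} [NormedAddCommGroup E] [NormedSpace ℂ E]
    {f : E → ℂ} {c : E} {R M : ℝ} (hR : 0 < R) (hf : DifferentiableOn ℂ f (Metric.ball c R))
    (hM : ∀ z ∈ Metric.ball c R, ‖f z‖ ≤ M) : ‖fderiv ℂ f c‖ ≤ 2 * M / R := by
  refine Complex.norm_fderiv_le_div_of_mapsTo_ball hf (fun z hz => ?_) hR
  rw [Metric.mem_closedBall, dist_eq_norm]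
  linarith [norm_sub_le (f z) (f c), hM z hz, hM c (Metric.mem_ball_self hR)]

/-- A uniform limit of holomorphic functions on an open subset of a normed space is
holomorphic. -/
theorem differentiableOn_of_tendstoUniformlyOn {E ι : Type*} [NormedAddCommGroup E]
    [NormedSpace ℂ E] {l : Filter ι} [l.NeBot] {f : ι → E → ℂ} {g : E → ℂ} {s : Set E}
    (hs : IsOpen s) (hfg : TendstoUniformlyOn f g l s)
    (hf : ∀ᶠ i in l, DifferentiableOn ℂ (f i) s) : DifferentiableOn ℂ g s := by
  intro x hx
  obtain ⟨r, hr, hrs⟩ := Metric.isOpen_iff.1 hs x hx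
  set t := Metric.ball x (r / 2)
  have hts : ∀ y ∈ t, Metric.ball y (r / 2) ⊆ s := fun y hy =>
    (Metric.ball_subset_ball' (by linarith [Metric.mem_ball.1 hy])).trans hrs
  have hts' : t ⊆ s := fun y hy => hts y hy (Metric.mem_ball_self (half_pos hr))
  have hcau : UniformCauchySeqOn (fun i => fderiv ℂ (f i)) l t := by
    intro u hu
    obtain ⟨ε, hε, hεu⟩ := Metric.mem_uniformity_dist.1 hu
    have h1 := hfg.uniformCauchySeqOn _
      (Metric.dist_mem_uniformity (show 0 < ε * (r / 2) / 4 by positivity))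
    have h2 : ∀ᶠ m : ι × ι in l ×ˢ l,
        DifferentiableOn ℂ (f m.1) s ∧ DifferentiableOn ℂ (f m.2) s := hf.prod_mk hf
    filter_upwards [h1, h2] with m hm hd y hy
    apply hεu
    have hys := hs.mem_nhds (hts' hy)
    rw [dist_eq_norm, ← fderiv_sub (hd.1.differentiableAt hys) (hd.2.differentiableAt hys)]
    have := norm_fderiv_le_of_norm_le_ball (M := ε * (r / 2) / 4) (half_pos hr)
      ((hd.1.sub hd.2).mono (hts y hy)) (fun z hz => by
        have := hm z (hts y hy hz)
        simp only [dist_eq_norm] at this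
        exact this.le)
    refine this.trans_lt ?_
    rw [div_lt_iff₀ (half_pos hr)]
    nlinarith [mul_pos hε hr]
  have hlim : ∀ y : E, ∃ a, y ∈ t → Tendsto (fun i => fderiv ℂ (f i) y) l (𝓝 a) := by
    intro y
    by_cases hy : y ∈ t
    · obtain ⟨a, ha⟩ := cauchy_map_iff_exists_tendsto.1 (hcau.cauchy_map hy)
      exact ⟨a, fun _ => ha⟩
    · exact ⟨0, fun h => absurd h hy⟩
  choose g' hg' using hlim
  have htx : t ∈ 𝓝 x := Metric.ball_mem_nhds x (half_pos hr)
  have hunif := (tendstoUniformlyOn_iff_tendstoUniformlyOnFilter.1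
    (hcau.tendstoUniformlyOn_of_tendsto hg')).mono_right (le_principal_iff.2 htx)
  refine (hasFDerivAt_of_tendstoUniformlyOnFilter (f := f) hunif ?_ ?_).differentiableAt
    |>.differentiableWithinAt
  · filter_upwards [hf.prod_mk (show ∀ᶠ y in 𝓝 x, y ∈ t from htx)] with p hp
    exact (hp.1.differentiableAt (hs.mem_nhds (hts' hp.2))).hasFDerivAt
  · filter_upwards [htx] with y hy
    exact hfg.tendsto_at (hts' hy)

/-- Difference quotients of a bounded holomorphic function converge at a uniform rate. -/
theorem norm_slope_sub_deriv_le {g : ℂ → ℂ} {ρ M : ℝ} (hρ : 0 < ρ)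
    (hg : DifferentiableOn ℂ g (Metric.ball 0 ρ)) (hM : ∀ t ∈ Metric.ball 0 ρ, ‖g t‖ ≤ M)
    {t : ℂ} (ht : t ∈ Metric.ball 0 ρ) (ht0 : t ≠ 0) :
    ‖slope g 0 t - deriv g 0‖ ≤ 4 * M / ρ / ρ * ‖t‖ := by
  have h0 : (0 : ℂ) ∈ Metric.ball 0 ρ := Metric.mem_ball_self hρ
  have hmaps : Set.MapsTo g (Metric.ball 0 ρ) (Metric.closedBall (g 0) (2 * M)) := fun z hz => by
    rw [Metric.mem_closedBall, dist_eq_norm]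
    linarith [norm_sub_le (g z) (g 0), hM z hz, hM 0 h0]
  have hk : ∀ z ∈ Metric.ball 0 ρ, ‖dslope g 0 z‖ ≤ 2 * M / ρ := fun z hz =>
    Complex.norm_dslope_le_div_of_mapsTo_ball hg hmaps hz
  have hmaps' : Set.MapsTo (dslope g 0) (Metric.ball 0 ρ)
      (Metric.closedBall (dslope g 0 0) (4 * M / ρ)) := fun z hz => by
    rw [Metric.mem_closedBall, dist_eq_norm]
    have : 4 * M / ρ = 2 * M / ρ + 2 * M / ρ := by ring
    linarith [norm_sub_le (dslope g 0 z) (dslope g 0 0), hk z hz, hk 0 h0]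
  have := Complex.dist_le_div_mul_dist_of_mapsTo_ball
    ((Complex.differentiableOn_dslope (Metric.ball_mem_nhds 0 hρ)).2 hg) hmaps' ht
  simpa [dslope_of_ne g ht0, dist_eq_norm] using this

/-- Directional derivatives of holomorphic functions on open subsets of normed spaces are
holomorphic. -/
theorem DifferentiableOn.fderiv_apply_complex {E : Type*} [NormedAddCommGroup E]
    [NormedSpace ℂ E] {f : E → ℂ} {s : Set E} (hs : IsOpen s) (hf : DifferentiableOn ℂ f s)
    (v : E) : DifferentiableOn ℂ (fun x => fderiv ℂ f x v) s := by
  intro x hx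
  obtain ⟨r, hr, hrs, M, hM⟩ : ∃ r > 0, Metric.ball x (2 * r) ⊆ s ∧
      ∃ M, ∀ y ∈ Metric.ball x (2 * r), ‖f y‖ ≤ M := by
    have hc := (hf.continuousOn.continuousAt (hs.mem_nhds hx)).norm.eventually_le_const
      (lt_add_one ‖f x‖)
    obtain ⟨r, hr, h⟩ := Metric.eventually_nhds_iff_ball.1 (hc.and (hs.mem_nhds hx))
    exact ⟨r / 2, half_pos hr, fun y hy => (h y (by convert hy using 2; ring)).2, _,
      fun y hy => (h y (by convert hy using 2; ring)).1⟩
  set ρ := r / (‖v‖ + 1)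
  have hρ : 0 < ρ := by positivity
  have hmem : ∀ y ∈ Metric.ball x r, ∀ t ∈ Metric.ball (0 : ℂ) ρ,
      y + t • v ∈ Metric.ball x (2 * r) := fun y hy t ht => by
    rw [mem_ball_iff_norm] at *
    rw [sub_zero, lt_div_iff₀ (by positivity)] at ht
    have : y + t • v - x = (y - x) + t • v := by abel
    rw [this]
    have := norm_add_le (y - x) (t • v)
    rw [norm_smul] at this
    nlinarith [norm_nonneg t]
  have hline : ∀ y ∈ Metric.ball x r, ∀ t ∈ Metric.ball (0 : ℂ) ρ,
      HasDerivAt (fun t : ℂ => f (y + t • v)) (fderiv ℂ f (y + t • v) v) t := fun y hy t ht => by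
    have h1 := (hf.differentiableAt (hs.mem_nhds (hrs (hmem y hy t ht)))).hasFDerivAt
    have h2 : HasDerivAt (fun t : ℂ => y + t • v) v t := by
      simpa using ((hasDerivAt_id t).smul_const v).const_add y
    exact h1.comp_hasDerivAt t h2
  have hunif : TendstoUniformlyOn (fun (t : ℂ) y => slope (fun t : ℂ => f (y + t • v)) 0 t)
      (fun y => fderiv ℂ f y v) (𝓝[≠] 0) (Metric.ball x r) := by
    rw [Metric.tendstoUniformlyOn_iff]
    intro ε hε
    have hlim : Tendsto (fun t : ℂ => 4 * M / ρ / ρ * ‖t‖) (𝓝[≠] 0) (𝓝 0) := by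
      have : Continuous fun t : ℂ => 4 * M / ρ / ρ * ‖t‖ := by fun_prop
      simpa using (this.tendsto 0).mono_left nhdsWithin_le_nhds
    filter_upwards [hlim.eventually_lt_const hε, self_mem_nhdsWithin,
      nhdsWithin_le_nhds (Metric.ball_mem_nhds (0 : ℂ) hρ)] with t ht ht0 htρ y hy
    have hd := (hline y hy 0 (Metric.mem_ball_self hρ)).deriv
    rw [zero_smul, add_zero] at hd
    rw [dist_comm, dist_eq_norm, ← hd]
    exact (norm_slope_sub_deriv_le hρ
      (fun t ht => (hline y hy t ht).differentiableAt.differentiableWithinAt)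
      (fun t ht => hM _ (hmem y hy t ht)) htρ ht0).trans_lt ht
  refine ((differentiableOn_of_tendstoUniformlyOn Metric.isOpen_ball hunif ?_).differentiableAt
    (Metric.ball_mem_nhds x hr)).differentiableWithinAt
  filter_upwards [nhdsWithin_le_nhds (Metric.ball_mem_nhds (0 : ℂ) hρ)] with t ht
  simp only [slope_def_field, zero_smul, add_zero, div_eq_mul_inv]
  refine DifferentiableOn.mul_const (DifferentiableOn.fun_sub ?_ ?_) _
  · exact hf.comp (by fun_prop) fun y hy => hrs (hmem y hy t ht)
  · exact hf.mono ((Metric.ball_subset_ball (by linarith)).trans hrs)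

theorem iterate_pderivC_eq_iteratedDeriv {n : ℕ} (i : Fin n) (f : (Fin n → ℂ) → ℂ) (k : ℕ)
    (z : Fin n → ℂ) :
    (pderivC i)^[k] f z = iteratedDeriv k (fun t => f (Function.update z i t)) (z i) := by
  induction k generalizing z with
  | zero => simp
  | succ k ih =>
    rw [Function.iterate_succ_apply', iteratedDeriv_succ]
    simp only [pderivC, ih, Function.update_idem, Function.update_self]

section Parametric

variable {n m : ℕ}

/-- A function of `(z, w)` obtained by applying an operator in the variable `z`. -/
def applyFst (T : ((Fin n → ℂ) → ℂ) → (Fin n → ℂ) → ℂ)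
    (G : (Fin n → ℂ) × (Fin m → ℂ) → ℂ) (p : (Fin n → ℂ) × (Fin m → ℂ)) : ℂ :=
  T (fun z => G (z, p.2)) p.1

theorem hasDerivAt_update_fst (i : Fin n) (p : (Fin n → ℂ) × (Fin m → ℂ)) (t : ℂ) :
    HasDerivAt (fun t : ℂ => (Function.update p.1 i t, p.2))
      ((Pi.single i 1, 0) : (Fin n → ℂ) × (Fin m → ℂ)) t :=
  (hasDerivAt_update p.1 i t).prodMk (hasDerivAt_const t p.2)

theorem DifferentiableOn.applyFst_pderivC {G : (Fin n → ℂ) × (Fin m → ℂ) → ℂ}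
    {s : Set ((Fin n → ℂ) × (Fin m → ℂ))} (hs : IsOpen s) (hG : DifferentiableOn ℂ G s)
    (i : Fin n) : DifferentiableOn ℂ (applyFst (pderivC i) G) s := by
  refine (hG.fderiv_apply_complex hs (Pi.single i 1, 0)).congr fun p hp => ?_
  have h1 := (hG.differentiableAt (hs.mem_nhds hp)).hasFDerivAt
  refine (HasFDerivAt.comp_hasDerivAt (p.1 i) (f := fun t : ℂ => (Function.update p.1 i t, p.2))
    ?_ (hasDerivAt_update_fst i p (p.1 i))).deriv
  simpa using h1

theorem DifferentiableOn.applyFst_iterate_pderivC {G : (Fin n → ℂ) × (Fin m → ℂ) → ℂ}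
    {s : Set ((Fin n → ℂ) × (Fin m → ℂ))} (hs : IsOpen s) (hG : DifferentiableOn ℂ G s)
    (i : Fin n) (k : ℕ) : DifferentiableOn ℂ (applyFst (pderivC i)^[k] G) s := by
  induction k with
  | zero => exact hG
  | succ k ih =>
    rw [Function.iterate_succ']
    exact ih.applyFst_pderivC hs i

theorem norm_applyFst_iterate_pderivC_le {G : (Fin n → ℂ) × (Fin m → ℂ) → ℂ}
    {p₀ p : (Fin n → ℂ) × (Fin m → ℂ)} {R s M : ℝ} (hs : 0 < s)
    (hG : DifferentiableOn ℂ G (Metric.ball p₀ (R + s)))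
    (hM : ∀ q ∈ Metric.ball p₀ (R + s), ‖G q‖ ≤ M) (i : Fin n) (k : ℕ)
    (hp : p ∈ Metric.ball p₀ R) :
    ‖applyFst (pderivC i)^[k] G p‖ ≤ M * (k.factorial / s ^ k) := by
  have hmem : ∀ t ∈ Metric.closedBall (p.1 i) s,
      (Function.update p.1 i t, p.2) ∈ Metric.ball p₀ (R + s) := fun t ht => by
    have h1 : dist (Function.update p.1 i t, p.2) p ≤ s := by
      rw [Prod.dist_eq, dist_self]
      refine max_le ((dist_pi_le_iff hs.le).2 fun j => ?_) hs.le
      rcases eq_or_ne j i with rfl | hj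
      · simpa using ht
      · simpa [hj] using hs.le
    rw [Metric.mem_ball] at *
    linarith [dist_triangle (Function.update p.1 i t, p.2) p p₀]
  have hd : DifferentiableOn ℂ (fun t => G (Function.update p.1 i t, p.2))
      (Metric.closedBall (p.1 i) s) :=
    hG.comp (fun t _ =>
      (hasDerivAt_update_fst i p t).differentiableAt.differentiableWithinAt) hmem
  rw [applyFst, iterate_pderivC_eq_iteratedDeriv]
  refine (norm_iteratedDeriv_le_of_forall_mem_sphere_norm_le k hs
    (hd.mono Metric.closure_ball_subset_closedBall).diffContOnCl
    (fun t ht => hM _ (hmem t (Metric.sphere_subset_closedBall ht)))).trans_eq ?_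
  ring

theorem applyFst_foldr_pderivC_bound (α : Fin n → ℕ) {G : (Fin n → ℂ) × (Fin m → ℂ) → ℂ}
    {p₀ : (Fin n → ℂ) × (Fin m → ℂ)} {s M : ℝ} (hs : 0 < s) (l : List (Fin n)) (R : ℝ)
    (hG : DifferentiableOn ℂ G (Metric.ball p₀ (R + l.length * s)))
    (hM : ∀ q ∈ Metric.ball p₀ (R + l.length * s), ‖G q‖ ≤ M) :
    DifferentiableOn ℂ (applyFst (fun f => l.foldr (fun i g => (pderivC i)^[α i] g) f) G)
        (Metric.ball p₀ R) ∧
      ∀ p ∈ Metric.ball p₀ R,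
        ‖applyFst (fun f => l.foldr (fun i g => (pderivC i)^[α i] g) f) G p‖ ≤
          M * (l.map fun i => ((α i).factorial / s ^ α i : ℝ)).prod := by
  induction l generalizing R with
  | nil =>
    rw [List.length_nil, Nat.cast_zero, zero_mul, add_zero] at hG hM
    exact ⟨hG, fun p hp => (hM p hp).trans_eq (by simp)⟩
  | cons i l ih =>
    have e : R + (i :: l).length * s = R + s + l.length * s := by
      rw [List.length_cons]; push_cast; ring
    rw [e] at hG hM
    obtain ⟨h1, h2⟩ := ih (R + s) hG hM
    have e' : applyFst (fun f => (i :: l).foldr (fun i g => (pderivC i)^[α i] g) f) G =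
        applyFst (pderivC i)^[α i]
          (applyFst (fun f => l.foldr (fun i g => (pderivC i)^[α i] g) f) G) := rfl
    rw [e']
    refine ⟨(h1.applyFst_iterate_pderivC Metric.isOpen_ball i (α i)).mono
      (Metric.ball_subset_ball (by linarith)), fun p hp => ?_⟩
    refine (norm_applyFst_iterate_pderivC_le hs h1 h2 i (α i) hp).trans_eq ?_
    rw [List.map_cons, List.prod_cons]
    ring

theorem applyFst_multiDeriv_bound (α : Fin n → ℕ) {G : (Fin n → ℂ) × (Fin m → ℂ) → ℂ}
    {p₀ : (Fin n → ℂ) × (Fin m → ℂ)} {R s M : ℝ} (hs : 0 < s)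
    (hG : DifferentiableOn ℂ G (Metric.ball p₀ (R + n * s)))
    (hM : ∀ q ∈ Metric.ball p₀ (R + n * s), ‖G q‖ ≤ M) :
    DifferentiableOn ℂ (applyFst (multiDeriv α) G) (Metric.ball p₀ R) ∧
      ∀ p ∈ Metric.ball p₀ R,
        ‖applyFst (multiDeriv α) G p‖ ≤ M * (mfact α / s ^ mdeg α) := by
  have := applyFst_foldr_pderivC_bound α hs (List.finRange n) R (by simpa using hG)
    (by simpa using hM)
  rwa [← Fin.prod_univ_def, Finset.prod_div_distrib, Finset.prod_pow_eq_pow_sum,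
    ← Nat.cast_prod] at this

end Parametric

theorem summable_pow_mdeg (n : ℕ) {q : ℝ} (h0 : 0 ≤ q) (h1 : q < 1) :
    Summable fun α : Fin n → ℕ => q ^ mdeg α := by
  induction n with
  | zero => exact .of_finite
  | succ n ih =>
    rw [← (Fin.consEquiv fun _ : Fin (n + 1) => ℕ).summable_iff]
    refine ((summable_geometric_of_lt_one h0 h1).mul_of_nonneg ih (fun _ => by positivity)
      fun _ => by positivity).congr fun x => ?_
    simp [mdeg, Fin.consEquiv, Fin.sum_univ_succ, pow_add]

/-- If the functional-valued map `ξ(·)` is holomorphic on `D` and locally uniformly bounded,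
and `F(z,w)` is holomorphic near `(z₀, w₀)`, then `(z,w) ↦ (ξ(w)·F(·,w))(z)` is holomorphic
near `(z₀, w₀)`. -/
theorem statement4 {n m : ℕ} (D : Set (Fin m → ℂ)) (hDo : IsOpen D) (hDc : IsConnected D)
    (ξ : (Fin m → ℂ) → (Fin n → ℕ) → ℂ) (hmem : ∀ w ∈ D, MemL1 (ξ w))
    (hhol : ∀ α : Fin n → ℕ, DifferentiableOn ℂ (fun w => ξ w α) D)
    (hlub : LocUnifBdd ξ D)
    (w₀ : Fin m → ℂ) (hw₀ : w₀ ∈ D) (z₀ : Fin n → ℂ)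
    (Ω : Set ((Fin n → ℂ) × (Fin m → ℂ))) (hΩo : IsOpen Ω) (hΩmem : (z₀, w₀) ∈ Ω)
    (F : (Fin n → ℂ) × (Fin m → ℂ) → ℂ) (hF : DifferentiableOn ℂ F Ω) :
    ∃ U ∈ 𝓝 ((z₀, w₀) : (Fin n → ℂ) × (Fin m → ℂ)),
      DifferentiableOn ℂ (fun p : (Fin n → ℂ) × (Fin m → ℂ) =>
        xiAct (ξ p.2) (fun z => F (z, p.2)) p.1) U := by
  obtain ⟨r, hr, hrΩ, M, hM⟩ : ∃ r > 0, Metric.ball (z₀, w₀) r ⊆ Ω ∧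
      ∃ M, ∀ p ∈ Metric.ball (z₀, w₀) r, ‖F p‖ ≤ M := by
    have hc := (hF.continuousOn.continuousAt (hΩo.mem_nhds hΩmem)).norm.eventually_le_const
      (lt_add_one ‖F (z₀, w₀)‖)
    obtain ⟨r, hr, h⟩ := Metric.eventually_nhds_iff_ball.1 (hc.and (hΩo.mem_nhds hΩmem))
    exact ⟨r, hr, fun p hp => (h p hp).2, _, fun p hp => (h p hp).1⟩
  set s := r / (n + 1)
  have hs : 0 < s := by positivity
  have hrs : s + n * s = r := by simp only [s]; field_simp; ring
  have key := fun α => applyFst_multiDeriv_bound α (p₀ := (z₀, w₀)) (R := s) hs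
    (by rw [hrs]; exact hF.mono hrΩ) (by rw [hrs]; exact hM)
  obtain ⟨V, hV, C, hC⟩ := hlub w₀ hw₀ (2 / s) (by positivity)
  obtain ⟨U, hUsub, hUo, hU⟩ := mem_nhds_iff.1 (inter_mem (Metric.ball_mem_nhds (z₀, w₀) hs)
    (continuous_snd.continuousAt.preimage_mem_nhds
      (inter_mem hV (hDo.mem_nhds hw₀) : V ∩ D ∈ 𝓝 (z₀, w₀).2)))
  refine ⟨U, hUo.mem_nhds hU, ?_⟩
  have hξ : ∀ w ∈ V ∩ D, ∀ α, ‖ξ w α‖ * (2 / s) ^ mdeg α ≤ max C 0 := fun w hw α => by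
    have h := (ENNReal.le_tsum α).trans (hC w hw)
    exact (ENNReal.ofReal_le_ofReal_iff'.1 h).elim (le_max_of_le_left ·) (le_max_of_le_right ·)
  have hunif := tendstoUniformlyOn_tsum (s := U)
    (f := fun α p => ξ p.2 α * applyFst (multiDeriv α) F p / mfact α)
    ((summable_pow_mdeg n (by norm_num) (by norm_num : (1 / 2 : ℝ) < 1)).mul_left (max C 0 * M))
    fun α p hp => ?_
  · refine differentiableOn_of_tendstoUniformlyOn hUo hunif (Eventually.of_forall fun t => ?_)
    simp only [div_eq_mul_inv]
    refine DifferentiableOn.fun_sum fun α _ => (DifferentiableOn.fun_mul ?_ ?_).mul_const _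
    · exact (hhol α).comp differentiable_snd.differentiableOn fun p hp => (hUsub hp).2.2
    · exact (key α).1.mono fun p hp => (hUsub hp).1
  · have hf : (0 : ℝ) < mfact α := by
      exact_mod_cast Finset.prod_pos fun i _ => Nat.factorial_pos (α i)
    have h1 := (key α).2 p (hUsub hp).1
    have h2 := hξ p.2 (hUsub hp).2 α
    have hM0 : 0 ≤ M := (norm_nonneg _).trans (hM _ (Metric.mem_ball_self hr))
    rw [norm_div, norm_mul, Complex.norm_natCast, div_le_iff₀ hf]
    calc ‖ξ p.2 α‖ * ‖applyFst (multiDeriv α) F p‖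
        ≤ ‖ξ p.2 α‖ * (M * (mfact α / s ^ mdeg α)) := by gcongr
      _ = ‖ξ p.2 α‖ * (2 / s) ^ mdeg α * (M * (1 / 2) ^ mdeg α * mfact α) := by
        rw [div_pow 2, div_pow 1, one_pow]; field_simp
      _ ≤ max C 0 * (M * (1 / 2) ^ mdeg α * mfact α) := by gcongr
      _ = _ := by ring
end
end
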